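/- Let W_H, ..., W₁ ∈ GL_d(ℝ) be balanced (W_{i+1}ᵀW_{i+1} = W_iW_iᵀ for all i) with product W = W_H⋯W₁. If G_{H-1}, ..., G₁ ∈ GL_d(ℝ) are such that the matrices (W_H G_{H-1}, G_{H-1}^{-1} W_{H-1} G_{H-2}, ..., G₁^{-1}W₁) are also balanced, then every G_j is orthogonal. -/

import Mathlib

open Matrix

open scoped MatrixOrder in
lemma psd_pow_inj {d n : ℕ} (hn : n ≠ 0) (A B : Matrix (Fin d) (Fin d) ℝ)
    (hA : A.PosSemidef) (hB : B.PosSemidef) (h : A ^ n = B ^ n) : A = B := by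
  have key : ∀ M : Matrix (Fin d) (Fin d) ℝ, M.PosSemidef →
      cfc (fun x : ℝ => x ^ ((n : ℝ)⁻¹)) (M ^ n) = M := by
    intro M hM
    have hsa : IsSelfAdjoint M := hM.isHermitian
    have hc : Continuous (fun x : ℝ => x ^ ((n : ℝ)⁻¹)) :=
      Real.continuous_rpow_const (by positivity)
    rw [← cfc_comp_pow (R := ℝ) (fun x : ℝ => x ^ ((n : ℝ)⁻¹)) n M (hc.continuousOn) hsa]
    conv_rhs => rw [← cfc_id ℝ M hsa]
    apply cfc_congr
    intro x hx
    have hx0 : 0 ≤ x := spectrum_nonneg_of_nonneg (Matrix.nonneg_iff_posSemidef.mpr hM) hx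
    simp only [id]
    exact Real.pow_rpow_inv_natCast hx0 hn
  rw [← key A hA, ← key B hB, h]

/-- Partial products `W k * ... * W 1`. -/
def partProd {d : ℕ} (W : ℕ → Matrix (Fin d) (Fin d) ℝ) : ℕ → Matrix (Fin d) (Fin d) ℝ
  | 0 => 1
  | k + 1 => W (k + 1) * partProd W k

lemma partProd_gram {d H : ℕ} (W : ℕ → Matrix (Fin d) (Fin d) ℝ)
    (hbal : ∀ i, 1 ≤ i → i < H → (W (i + 1))ᵀ * W (i + 1) = W i * (W i)ᵀ) (k : ℕ) (hk : k ≤ H) :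
    (partProd W k)ᵀ * partProd W k = ((W 1)ᵀ * W 1) ^ k := by
  have aux : ∀ k, k + 1 ≤ H →
      (W (k + 1))ᵀ * partProd W (k + 1) = partProd W k * ((W 1)ᵀ * W 1) := by
    intro k
    induction k with
    | zero => intro _; simp [partProd]
    | succ k ih =>
      intro hk
      calc (W (k + 1 + 1))ᵀ * partProd W (k + 1 + 1)
          = ((W (k + 1 + 1))ᵀ * W (k + 1 + 1)) * partProd W (k + 1) := by
            rw [Matrix.mul_assoc]; rfl
        _ = W (k + 1) * ((W (k + 1))ᵀ * partProd W (k + 1)) := by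
            rw [hbal (k + 1) (by omega) (by omega), Matrix.mul_assoc]
        _ = partProd W (k + 1) * ((W 1)ᵀ * W 1) := by
            rw [ih (by omega), ← Matrix.mul_assoc]; rfl
  induction k with
  | zero => simp [partProd]
  | succ k ih =>
    have h1 : (partProd W (k + 1))ᵀ = (partProd W k)ᵀ * (W (k + 1))ᵀ := by
      simp [partProd, Matrix.transpose_mul]
    rw [h1, Matrix.mul_assoc, aux k hk, ← Matrix.mul_assoc, ih (by omega), pow_succ]

/-- If the invertible matrices W_H,...,W₁ are balanced and the modified tuple
(W_H G_{H-1}, G_{H-1}⁻¹ W_{H-1} G_{H-2}, ..., G₁⁻¹ W₁) is also balanced (with invertible G_j),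
then every G_j is orthogonal. Layers are indexed 1,...,H, with the convention G 0 = G H = 1,
so layer l of the modified tuple is (G l)⁻¹ * W l * G (l-1). -/
theorem stmt_12 (d H : ℕ) (hH : 1 ≤ H)
    (W G : ℕ → Matrix (Fin d) (Fin d) ℝ)
    (hWinv : ∀ l, 1 ≤ l → l ≤ H → IsUnit (W l))
    (hGinv : ∀ j, 1 ≤ j → j < H → IsUnit (G j))
    (hG0 : G 0 = 1) (hGH : G H = 1)
    (hbal : ∀ i, 1 ≤ i → i < H → (W (i + 1))ᵀ * W (i + 1) = W i * (W i)ᵀ)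
    (hbal' : ∀ i, 1 ≤ i → i < H →
      ((G (i + 1))⁻¹ * W (i + 1) * G i)ᵀ * ((G (i + 1))⁻¹ * W (i + 1) * G i)
        = ((G i)⁻¹ * W i * G (i - 1)) * ((G i)⁻¹ * W i * G (i - 1))ᵀ) :
    ∀ j, 1 ≤ j → j < H → (G j)ᵀ * G j = 1 := by
  have hGu : ∀ j, j ≤ H → IsUnit (G j).det := by
    intro j hj
    rcases Nat.eq_zero_or_pos j with h | h
    · subst h; simp [hG0]
    · rcases Nat.lt_or_eq_of_le hj with h' | h'
      · exact (Matrix.isUnit_iff_isUnit_det _).mp (hGinv j h h')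
      · subst h'; simp [hGH]
  set V : ℕ → Matrix (Fin d) (Fin d) ℝ := fun l => (G l)⁻¹ * W l * G (l - 1) with hV
  have hQ : ∀ k, k ≤ H → partProd V k = (G k)⁻¹ * partProd W k := by
    intro k
    induction k with
    | zero => intro _; simp [partProd, hG0]
    | succ k ih =>
      intro hk
      have e : V (k + 1) = (G (k + 1))⁻¹ * W (k + 1) * G k := rfl
      simp only [partProd]
      rw [ih (by omega), e, Matrix.mul_assoc _ (G k), ← Matrix.mul_assoc (G k),
        Matrix.mul_nonsing_inv _ (hGu k (by omega)), Matrix.one_mul, Matrix.mul_assoc]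
  have hgW := partProd_gram (H := H) W hbal
  have hgV := partProd_gram (H := H) V hbal'
  have hAB : (W 1)ᵀ * W 1 = (V 1)ᵀ * V 1 := by
    apply psd_pow_inj (n := H) (by omega)
    · simpa using Matrix.posSemidef_conjTranspose_mul_self (W 1)
    · simpa using Matrix.posSemidef_conjTranspose_mul_self (V 1)
    · rw [← hgW H le_rfl, ← hgV H le_rfl, hQ H le_rfl, hGH]
      simp
  have hPu : ∀ k, k ≤ H → IsUnit (partProd W k) := by
    intro k
    induction k with
    | zero => intro _; exact isUnit_one
    | succ k ih => intro hk; exact (hWinv (k + 1) (by omega) hk).mul (ih (by omega))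
  intro j hj1 hjH
  have h1 := hgV j hjH.le
  rw [← hAB, ← hgW j hjH.le, hQ j hjH.le, Matrix.transpose_mul] at h1
  have hP := hPu j hjH.le
  have hPt : IsUnit (partProd W j)ᵀ := (Matrix.isUnit_transpose _).mpr hP
  have h2 : ((G j)⁻¹)ᵀ * (G j)⁻¹ = 1 := by
    apply hPt.mul_left_cancel
    apply hP.mul_right_cancel
    simpa [Matrix.mul_assoc] using h1
  have hg := Matrix.mul_nonsing_inv _ (hGu j hjH.le)
  have hg' := Matrix.nonsing_inv_mul _ (hGu j hjH.le)
  have h3 : ((G j)⁻¹)ᵀ = G j := by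
    calc ((G j)⁻¹)ᵀ = ((G j)⁻¹)ᵀ * ((G j)⁻¹ * G j) := by rw [hg', Matrix.mul_one]
      _ = G j := by rw [← Matrix.mul_assoc, h2, Matrix.one_mul]
  have h4 : (G j)ᵀ = (G j)⁻¹ := by
    rw [← Matrix.transpose_transpose (G j)⁻¹, h3]
  rw [h4, hg']
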